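/- arXiv:1302.5790 — 2 statements merged into one kernel-verified Lean document; each statement's English description precedes it below -/
import Mathlib

section
/- The geodesic distance on real hyperbolic space H^n_ℝ (n ≥ 2) is a kernel of negative type; equivalently, the square root of the geodesic distance is a Hilbert space distance. -/
open Finset

/-- The inverse hyperbolic cosine on `[1, ∞)`. -/
noncomputable def arcosh (x : ℝ) : ℝ := Real.log (x + Real.sqrt (x ^ 2 - 1))

/-- The Lorentzian form `⟨x,y⟩ = -x⁰y⁰ + x¹y¹ + … + xⁿyⁿ` on `ℝ^{n+1}`. -/
def lorentzForm {n : ℕ} (x y : Fin (n + 1) → ℝ) : ℝ :=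
  -(x 0 * y 0) + ∑ i : Fin n, x i.succ * y i.succ

/-- The geodesic distance on real hyperbolic space `H^n_ℝ`, in terms of negative
representative vectors: `cosh d(x,y) = |⟨x,y⟩| / (⟨x,x⟩⟨y,y⟩)^{1/2}`. -/
noncomputable def hypDist {n : ℕ} (x y : Fin (n + 1) → ℝ) : ℝ :=
  arcosh (|lorentzForm x y| / Real.sqrt (lorentzForm x x * lorentzForm y y))

/-!
Let `c = cosh d`. The number `e⁻ᵈ` is the smaller fixed point of `v ↦ (1 + v²) / (2 c)`, so it is
the limit of the iterates of this map started at `0`, which are polynomials in `1 / c` with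
nonnegative coefficients. By the Schur product theorem, `e⁻ᵈ` is a positive semidefinite kernel as
soon as `1 / c` is. Moreover `eᵈ = 2 c - e⁻ᵈ`, that is,
`d = log c + log 2 + log (1 - e⁻ᵈ / (2 c))`, and `-log (1 - a)` is a power series with nonnegative
coefficients. Hence `d` is of negative type whenever `log c` is of negative type and `1 / c` is
positive semidefinite.

In the hyperboloid model, `c = r u * r v * (1 - ⟪û, v̂⟫)`, where `r u = √(1 + ‖u‖²)` and
`û = u / r u` lies in the open unit ball. So `log c` is of negative type and `1 / c` is positive
semidefinite, again by the power series of `-log (1 - a)` and `(1 - a)⁻¹`. The embedding into a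
Hilbert space is then Schoenberg's: the Gromov product of a kernel of negative type is positive
semidefinite, hence the Gram matrix of a family of vectors.
-/

open Filter Topology
open scoped RealInnerProductSpace

section NegativeType

variable {X : Type*}

theorem posSemidef_of_forall_finset {R : Type*} [Ring R] [PartialOrder R] [StarRing R]
    {A : Matrix X X R}
    (hA : ∀ s : Finset X, (A.submatrix ((↑) : s → X) (↑)).PosSemidef) : A.PosSemidef := by
  classical
  refine ⟨Matrix.IsHermitian.ext fun x y => ?_, fun t => ?_⟩
  · exact (hA {x, y}).isHermitian.apply ⟨x, by simp⟩ ⟨y, by simp⟩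
  · simpa [Finsupp.sum, ← sum_attach t.support, ← subtype_mem_eq_attach,
      ← Finsupp.support_subtypeDomain] using (hA t.support).2 (t.subtypeDomain (· ∈ t.support))

open scoped ComplexOrder in
theorem posSemidef_gram (𝕜 : Type*) {E : Type*} [RCLike 𝕜] [SeminormedAddCommGroup E]
    [InnerProductSpace 𝕜 E] (v : X → E) : (Matrix.gram 𝕜 v).PosSemidef :=
  posSemidef_of_forall_finset fun s => Matrix.posSemidef_gram 𝕜 fun x : s => v x

theorem posSemidef_of_tendsto {R ι : Type*} [Ring R] [PartialOrder R] [StarRing R]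
    [TopologicalSpace R] [OrderClosedTopology R] [IsTopologicalRing R] [ContinuousStar R]
    {l : Filter ι} [l.NeBot] {A : ι → Matrix X X R} {B : Matrix X X R}
    (hA : ∀ i, (A i).PosSemidef) (hlim : ∀ x y, Tendsto (fun i => A i x y) l (𝓝 (B x y))) :
    B.PosSemidef := by
  refine ⟨Matrix.IsHermitian.ext fun x y => ?_, fun t => ?_⟩
  · exact tendsto_nhds_unique ((hlim y x).star.congr fun i => (hA i).isHermitian.apply x y)
      (hlim x y)
  · exact ge_of_tendsto' (tendsto_finsetSum _ fun x _ => tendsto_finsetSum _ fun y _ =>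
      ((hlim x y).const_mul _).mul_const _) fun i => (hA i).2 t

theorem posSemidef_map_pow {A : Matrix X X ℝ} (hA : A.PosSemidef) (k : ℕ) :
    (A.map (· ^ k)).PosSemidef := by
  induction k with
  | zero =>
    convert! posSemidef_gram ℝ fun _ : X => (1 : ℝ) using 1
    ext; simp
  | succ k ih => simpa only [pow_succ] using! ih.hadamard hA

theorem posSemidef_map_of_hasSum {A : Matrix X X ℝ} (hA : A.PosSemidef) {c : ℕ → ℝ} {f : ℝ → ℝ}
    (hc : ∀ k, 0 ≤ c k) (hf : ∀ x y, HasSum (fun k => c k * A x y ^ k) (f (A x y))) :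
    (A.map f).PosSemidef := by
  refine posSemidef_of_tendsto (A := fun n => ∑ k ∈ range n, c k • A.map (· ^ k))
    (fun n => Matrix.posSemidef_sum _ fun k _ => (posSemidef_map_pow hA k).smul (hc k))
    (l := atTop) fun x y => ?_
  simpa [Matrix.sum_apply] using (hf x y).tendsto_sum_nat

theorem posSemidef_map_inv_one_sub {A : Matrix X X ℝ} (hA : A.PosSemidef)
    (h : ∀ x y, |A x y| < 1) : (A.map fun a => (1 - a)⁻¹).PosSemidef :=
  posSemidef_map_of_hasSum hA (c := 1) (fun _ => zero_le_one)
    fun x y => by simpa using hasSum_geometric_of_abs_lt_one (h x y)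

theorem posSemidef_map_neg_log_one_sub {A : Matrix X X ℝ} (hA : A.PosSemidef)
    (h : ∀ x y, |A x y| < 1) : (A.map fun a => -Real.log (1 - a)).PosSemidef := by
  refine posSemidef_map_of_hasSum hA (c := fun k => (k : ℝ)⁻¹) (fun k => by positivity)
    fun x y => (hasSum_nat_add_iff' 1).mp ?_
  simpa [div_eq_inv_mul] using Real.hasSum_pow_div_log_of_abs_lt_one (h x y)

theorem exists_inner_eq_of_posSemidef.{u} {X : Type u} {A : Matrix X X ℝ} (hA : A.PosSemidef) :
    ∃ (H : Type u) (_ : NormedAddCommGroup H) (_ : InnerProductSpace ℝ H) (f : X → H),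
      ∀ x y, ⟪f x, f y⟫ = A x y := by
  let K : Matrix X X (ℝ →L[ℝ] ℝ) := A.map (ContinuousLinearMap.toSpanSingleton ℝ)
  have hsymm (x y : X) : A y x = A x y := hA.isHermitian.apply x y
  have hK : K.PosSemidef := by
    have posSemidef_iff := (RKHS.posSemidef_tfae (K := K)).out 0 2
    refine posSemidef_iff.mpr ⟨?_, fun t => ?_⟩
    · ext x y
      simp [K, ContinuousLinearMap.star_eq_adjoint,
        ContinuousLinearMap.adjoint_toSpanSingleton, hsymm]
    · simpa [K, hsymm, mul_comm, mul_left_comm, mul_assoc] using hA.2 t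
  have : Fact K.PosSemidef := ⟨hK⟩
  refine ⟨RKHS.OfKernel K, inferInstance, inferInstance,
    fun x => RKHS.kerFun (RKHS.OfKernel K) x 1, fun x y => ?_⟩
  rw [← RKHS.kernel_inner, RKHS.OfKernel.kernel_ofKernel]
  simp [K, hsymm]

/-- Kernels of negative type, tested on finite families indexed by `Fin m`, repetitions allowed. -/
def IsNegativeType {X : Type*} (d : X → X → ℝ) : Prop :=
  ∀ (m : ℕ) (x : Fin m → X) (t : Fin m → ℝ), ∑ i, t i = 0 →
    ∑ i, ∑ j, t i * t j * d (x i) (x j) ≤ 0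

/-- The Gromov product of `x` and `y` based at `o`, as a matrix: when `d x y = ‖f x - f y‖²`, it is
the inner product of `f x - f o` and `f y - f o`. -/
noncomputable def gromovProduct {X : Type*} (d : X → X → ℝ) (o : X) : Matrix X X ℝ :=
  Matrix.of fun x y => (d x o + d y o - d x y) / 2

namespace IsNegativeType

variable {d d' : X → X → ℝ}

theorem add (hd : IsNegativeType d) (hd' : IsNegativeType d') :
    IsNegativeType fun x y => d x y + d' x y := by
  intro m x t ht
  simpa only [mul_add, sum_add_distrib] using add_nonpos (hd m x t ht) (hd' m x t ht)

theorem apply_add_apply (g : X → ℝ) : IsNegativeType fun x y => g x + g y := by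
  intro m x t ht
  refine le_of_eq ?_
  calc ∑ i, ∑ j, t i * t j * (g (x i) + g (x j))
      = (∑ i, t i * g (x i)) * ∑ j, t j + (∑ i, t i) * ∑ j, t j * g (x j) := by
        simp only [sum_mul_sum, ← sum_add_distrib]
        congr! 2
        ring
    _ = 0 := by rw [ht, mul_zero, zero_mul, add_zero]

theorem neg_of_posSemidef {A : Matrix X X ℝ} (hA : A.PosSemidef) :
    IsNegativeType fun x y => -A x y := by
  intro m x t _
  have h := (hA.submatrix x).dotProduct_mulVec_nonneg t
  simpa [dotProduct, Matrix.mulVec, mul_sum, mul_assoc, mul_comm (A _ _)] using h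

theorem sum_nonpos {ι : Type*} [Fintype ι] (hd : IsNegativeType d) (x : ι → X) (t : ι → ℝ)
    (ht : ∑ i, t i = 0) : ∑ i, ∑ j, t i * t j * d (x i) (x j) ≤ 0 := by
  let e := (Fintype.equivFin ι).symm
  calc ∑ i, ∑ j, t i * t j * d (x i) (x j)
      = ∑ i, ∑ j, t (e i) * t (e j) * d (x (e i)) (x (e j)) := by
        rw [← e.sum_comp]
        exact sum_congr rfl fun i _ => (e.sum_comp fun j => t (e i) * t j * d (x (e i)) (x j)).symm
    _ ≤ 0 := hd _ (x ∘ e) (t ∘ e) ((e.sum_comp t).trans ht)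

theorem posSemidef_gromovProduct (hd : IsNegativeType d) (hsymm : ∀ x y, d x y = d y x) {o : X}
    (ho : d o o = 0) : (gromovProduct d o).PosSemidef := by
  refine posSemidef_of_forall_finset fun s => .of_dotProduct_mulVec_nonneg
    (Matrix.IsHermitian.ext fun x y => ?_) fun t => ?_
  · simp [gromovProduct, hsymm, add_comm]
  set T := ∑ x, t x with hT
  set S := ∑ x : s, t x * d x o with hS
  set Q := ∑ x : s, t x * ∑ y : s, t y * d x y with hQ
  -- Give the base point the weight `-T`, so that the weights sum to `0`.
  have extended_sum_nonpos : -T * S + (-T * S + Q) ≤ 0 := by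
    have h := hd.sum_nonpos (fun i : Option s => i.elim o (↑)) (fun i => i.elim (-T) t)
      (by simp [hT])
    simpa only [Fintype.sum_option, Option.elim, ho, hsymm o, sum_add_distrib, mul_add,
      mul_comm (t _) (-T), mul_assoc, mul_left_comm (t _) (-T), ← mul_sum, mul_zero,
      zero_add] using h
  have row_sum (x : s) : ∑ y : s, (d x o + d y o - d x y) / 2 * t y =
      (T * d x o + S - ∑ y : s, t y * d x y) / 2 := by
    rw [hT, hS, sum_mul, ← sum_add_distrib, ← sum_sub_distrib, sum_div]
    congr! 1
    ring
  calc 0 ≤ T * S - Q / 2 := by linarith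
    _ = ∑ x : s, t x * ((T * d x o + S - ∑ y : s, t y * d x y) / 2) := by
      simp only [mul_div_assoc', mul_sub, mul_add, mul_left_comm (t _) T, ← sum_div,
        sum_sub_distrib, sum_add_distrib, ← mul_sum, ← sum_mul, ← hS, ← hT, ← hQ]
      ring
    _ = _ := by simp only [← row_sum]; rfl

theorem exists_norm_sub_eq_sqrt.{u} {X : Type u} {d : X → X → ℝ} (hd : IsNegativeType d)
    (hsymm : ∀ x y, d x y = d y x) (hself : ∀ x, d x x = 0) :
    ∃ (H : Type u) (_ : NormedAddCommGroup H) (_ : InnerProductSpace ℝ H) (f : X → H),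
      ∀ x y, ‖f x - f y‖ = √(d x y) := by
  rcases isEmpty_or_nonempty X with _ | ⟨⟨o⟩⟩
  · have := Fintype.ofIsEmpty (α := X)
    exact ⟨EuclideanSpace ℝ X, inferInstance, inferInstance, isEmptyElim, isEmptyElim⟩
  · obtain ⟨H, _, _, f, hf⟩ :=
      exists_inner_eq_of_posSemidef (hd.posSemidef_gromovProduct hsymm (hself o))
    refine ⟨H, inferInstance, inferInstance, f, fun x y => ?_⟩
    rw [← Real.sqrt_sq (norm_nonneg (f x - f y)), norm_sub_sq_real, ← real_inner_self_eq_norm_sq,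
      ← real_inner_self_eq_norm_sq]
    simp only [hf, gromovProduct, Matrix.of_apply, hself]
    congr 1
    ring

end IsNegativeType

/-- The map `v ↦ (1 + v²) / (2 c)`, whose fixed points for `c = cosh d` are `e⁻ᵈ` and `eᵈ`; it
serves to approximate `e⁻ᵈ` by polynomials in `1 / c`. -/
noncomputable def expNegStep (c v : ℝ) : ℝ := (1 + v ^ 2) / (2 * c)

theorem expNegStep_cosh_sub_self (d v : ℝ) :
    expNegStep (Real.cosh d) v - v =
      (Real.exp (-d) - v) * (Real.exp d - v) / (2 * Real.cosh d) := by
  have exp_mul : Real.exp (-d) * Real.exp d = 1 := by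
    rw [← Real.exp_add, neg_add_cancel, Real.exp_zero]
  rw [expNegStep, eq_div_iff (by positivity), sub_mul, div_mul_cancel₀ _ (by positivity)]
  linear_combination -2 * v * Real.cosh_eq d - exp_mul

theorem tendsto_iterate_expNegStep {d : ℝ} (hd : 0 ≤ d) :
    Tendsto (fun n => (expNegStep (Real.cosh d))^[n] 0) atTop (𝓝 (Real.exp (-d))) := by
  set F := expNegStep (Real.cosh d)
  have hle : Real.exp (-d) ≤ Real.exp d := Real.exp_le_exp.mpr (by linarith)
  have hfix : F (Real.exp (-d)) = Real.exp (-d) :=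
    sub_eq_zero.mp (by rw [expNegStep_cosh_sub_self, sub_self, zero_mul, zero_div])
  have hbound (n : ℕ) : F^[n] 0 ∈ Set.Icc 0 (Real.exp (-d)) := by
    induction n with
    | zero => exact ⟨le_rfl, (Real.exp_pos _).le⟩
    | succ n ih =>
      rw [Function.iterate_succ_apply', ← hfix]
      refine ⟨by simp only [F, expNegStep]; positivity, ?_⟩
      simp only [F, expNegStep]
      gcongr
      exacts [ih.1, ih.2]
  have hmono : Monotone fun n => F^[n] 0 := monotone_nat_of_le_succ fun n => by
    rw [Function.iterate_succ_apply', ← sub_nonneg, expNegStep_cosh_sub_self]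
    have := (hbound n).2
    exact div_nonneg (mul_nonneg (by linarith) (by linarith)) (by positivity)
  obtain ⟨L, hL⟩ : ∃ L, Tendsto (fun n => F^[n] 0) atTop (𝓝 L) :=
    ⟨_, tendsto_atTop_ciSup hmono ⟨_, Set.forall_mem_range.mpr fun n => (hbound n).2⟩⟩
  have hL_le : L ≤ Real.exp (-d) := le_of_tendsto' hL fun n => (hbound n).2
  have hL_fix : F L = L :=
    isFixedPt_of_tendsto_iterate hL (by unfold F expNegStep; fun_prop)
  have hL_root : (Real.exp (-d) - L) * (Real.exp d - L) = 0 := by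
    have h := expNegStep_cosh_sub_self d L
    rw [show expNegStep (Real.cosh d) L = L from hL_fix, sub_self, eq_comm, div_eq_zero_iff] at h
    exact h.resolve_right (by positivity)
  have hL_eq : L = Real.exp (-d) := by
    rcases mul_eq_zero.mp hL_root with h | h <;> linarith
  rwa [← hL_eq]

theorem posSemidef_exp_neg_of_inv_cosh {d : X → X → ℝ} (hd : ∀ x y, 0 ≤ d x y)
    (hcosh : (Matrix.of fun x y => (Real.cosh (d x y))⁻¹).PosSemidef) :
    (Matrix.of fun x y => Real.exp (-d x y)).PosSemidef := by
  refine posSemidef_of_tendsto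
    (A := fun n => Matrix.of fun x y => (expNegStep (Real.cosh (d x y)))^[n] 0)
    (l := atTop) (fun n => ?_) fun x y => tendsto_iterate_expNegStep (hd x y)
  induction n with
  | zero => exact .zero
  | succ n ih =>
    convert (hcosh.add (hcosh.hadamard (posSemidef_map_pow ih 2))).smul
      (one_half_pos (α := ℝ)).le using 1
    ext x y
    simp only [Function.iterate_succ_apply', expNegStep, Matrix.of_apply, Matrix.smul_apply,
      Matrix.add_apply, Matrix.hadamard_apply, Matrix.map_apply, smul_eq_mul]
    ring

theorem eq_log_cosh_add (d : ℝ) :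
    d = Real.log (Real.cosh d) + Real.log 2 +
      Real.log (1 - Real.exp (-d) / (2 * Real.cosh d)) := by
  have exp_eq : Real.exp d = Real.cosh d * 2 * (1 - Real.exp (-d) / (2 * Real.cosh d)) := by
    have := (Real.cosh_pos d).ne'
    field_simp
    linear_combination -2 * Real.cosh_eq d
  have ne : 1 - Real.exp (-d) / (2 * Real.cosh d) ≠ 0 := by
    intro h
    simp [h] at exp_eq
  rw [← Real.log_mul (by positivity) (by positivity), ← Real.log_mul (by positivity) ne, ← exp_eq,
    Real.log_exp]

theorem IsNegativeType.of_log_cosh {d : X → X → ℝ} (hd : ∀ x y, 0 ≤ d x y)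
    (hlog : IsNegativeType fun x y => Real.log (Real.cosh (d x y)))
    (hinv : (Matrix.of fun x y => (Real.cosh (d x y))⁻¹).PosSemidef) : IsNegativeType d := by
  set A : Matrix X X ℝ :=
    Matrix.of fun x y => Real.exp (-d x y) / (2 * Real.cosh (d x y)) with hA_def
  have hA : A.PosSemidef := by
    convert! ((posSemidef_exp_neg_of_inv_cosh hd hinv).hadamard hinv).smul
      (one_half_pos (α := ℝ)).le using 1
    ext x y
    simp only [hA_def, Matrix.of_apply, Matrix.smul_apply, Matrix.hadamard_apply, smul_eq_mul]
    ring
  have hA_lt (x y : X) : |A x y| < 1 := by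
    have hexp : Real.exp (-d x y) ≤ 1 := Real.exp_le_one_iff.mpr (neg_nonpos.mpr (hd x y))
    have hcosh := Real.one_le_cosh (d x y)
    rw [hA_def, Matrix.of_apply, abs_of_pos (by positivity), div_lt_one (by positivity)]
    linarith
  have h := (hlog.add (apply_add_apply fun _ => Real.log 2 / 2)).add
    (neg_of_posSemidef (posSemidef_map_neg_log_one_sub hA hA_lt))
  convert h using 3 with x y
  simp only [add_halves, Matrix.map_apply, neg_neg]
  exact eq_log_cosh_add (d x y)

end NegativeType

section Hyperboloid

variable {E : Type*} [NormedAddCommGroup E] [InnerProductSpace ℝ E]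

/-- Minus the Lorentzian form of the points `(√(1 + ‖u‖²), u)` and `(√(1 + ‖v‖²), v)` of the upper
hyperboloid sheet in `ℝ × E`; it is the hyperbolic cosine of their distance. -/
noncomputable def hyperboloidForm (u v : E) : ℝ :=
  √(1 + ‖u‖ ^ 2) * √(1 + ‖v‖ ^ 2) - ⟪u, v⟫

/-- The geodesic distance of the hyperboloid model of the hyperbolic space of dimension `dim E`, a
point `(√(1 + ‖u‖²), u)` of the hyperboloid being represented by its spatial part `u`. -/
noncomputable def hyperboloidDist (u v : E) : ℝ := Real.arcosh (hyperboloidForm u v)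

theorem hyperboloidForm_comm (u v : E) : hyperboloidForm u v = hyperboloidForm v u := by
  rw [hyperboloidForm, hyperboloidForm, mul_comm, real_inner_comm]

theorem hyperboloidForm_self (u : E) : hyperboloidForm u u = 1 := by
  rw [hyperboloidForm, Real.mul_self_sqrt (by positivity), real_inner_self_eq_norm_sq,
    add_sub_cancel_right]

theorem one_le_hyperboloidForm (u v : E) : 1 ≤ hyperboloidForm u v := by
  have one_add_norm_mul_norm_le : 1 + ‖u‖ * ‖v‖ ≤ √(1 + ‖u‖ ^ 2) * √(1 + ‖v‖ ^ 2) := by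
    rw [← Real.sqrt_mul (by positivity)]
    exact Real.le_sqrt_of_sq_le (by linarith [sq_nonneg (‖u‖ - ‖v‖)])
  rw [hyperboloidForm]
  linarith [real_inner_le_norm u v]

theorem hyperboloidDist_comm (u v : E) : hyperboloidDist u v = hyperboloidDist v u := by
  rw [hyperboloidDist, hyperboloidForm_comm, hyperboloidDist]

theorem hyperboloidDist_self (u : E) : hyperboloidDist u u = 0 := by
  rw [hyperboloidDist, hyperboloidForm_self, Real.arcosh_zero]

theorem hyperboloidDist_nonneg (u v : E) : 0 ≤ hyperboloidDist u v :=
  Real.arcosh_nonneg (one_le_hyperboloidForm u v)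

theorem cosh_hyperboloidDist (u v : E) : Real.cosh (hyperboloidDist u v) = hyperboloidForm u v :=
  Real.cosh_arcosh (one_le_hyperboloidForm u v)

/-- The point of the Klein model, the open unit ball of `E`, on the line through
`(√(1 + ‖u‖²), u)`. -/
noncomputable def kleinPoint (u : E) : E := (√(1 + ‖u‖ ^ 2))⁻¹ • u

theorem abs_inner_kleinPoint_lt_one (u v : E) : |⟪kleinPoint u, kleinPoint v⟫| < 1 := by
  have norm_lt (w : E) : ‖kleinPoint w‖ < 1 := by
    rw [kleinPoint, norm_smul, norm_inv, Real.norm_of_nonneg (Real.sqrt_nonneg _),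
      inv_mul_lt_one₀ (by positivity)]
    exact Real.lt_sqrt_of_sq_lt (lt_one_add _)
  exact (abs_real_inner_le_norm _ _).trans_lt
    (mul_lt_one_of_nonneg_of_lt_one_left (norm_nonneg _) (norm_lt u) (norm_lt v).le)

theorem hyperboloidForm_eq_mul_one_sub_inner (u v : E) :
    hyperboloidForm u v =
      √(1 + ‖u‖ ^ 2) * √(1 + ‖v‖ ^ 2) * (1 - ⟪kleinPoint u, kleinPoint v⟫) := by
  rw [hyperboloidForm, kleinPoint, kleinPoint, real_inner_smul_left, real_inner_smul_right]
  field_simp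

theorem isNegativeType_log_hyperboloidForm :
    IsNegativeType fun u v : E => Real.log (hyperboloidForm u v) := by
  convert (IsNegativeType.apply_add_apply fun u : E => Real.log √(1 + ‖u‖ ^ 2)).add
    (.neg_of_posSemidef (posSemidef_map_neg_log_one_sub (posSemidef_gram ℝ kleinPoint)
      abs_inner_kleinPoint_lt_one)) using 3 with u v
  have inner_lt := (abs_lt.mp (abs_inner_kleinPoint_lt_one u v)).2
  rw [hyperboloidForm_eq_mul_one_sub_inner, Real.log_mul (by positivity) (by linarith),
    Real.log_mul (by positivity) (by positivity), Matrix.map_apply, Matrix.gram_apply, neg_neg]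

theorem posSemidef_inv_hyperboloidForm :
    (Matrix.of fun u v : E => (hyperboloidForm u v)⁻¹).PosSemidef := by
  convert! (posSemidef_gram ℝ fun u : E => (√(1 + ‖u‖ ^ 2))⁻¹).hadamard
    (posSemidef_map_inv_one_sub (posSemidef_gram ℝ kleinPoint)
      abs_inner_kleinPoint_lt_one) using 1
  ext u v
  simp only [hyperboloidForm_eq_mul_one_sub_inner, mul_inv, Matrix.of_apply, Matrix.hadamard_apply,
    Matrix.gram_apply, Matrix.map_apply, RCLike.inner_apply, conj_trivial, mul_comm]

theorem isNegativeType_hyperboloidDist : IsNegativeType (hyperboloidDist : E → E → ℝ) :=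
  .of_log_cosh hyperboloidDist_nonneg
    (by simpa only [cosh_hyperboloidDist] using isNegativeType_log_hyperboloidForm)
    (by simpa only [cosh_hyperboloidDist] using posSemidef_inv_hyperboloidForm)

end Hyperboloid

theorem hyperbolic_dist_negative_type_general.{u} (E : Type u) [NormedAddCommGroup E]
    [InnerProductSpace ℝ E] :
    IsNegativeType (hyperboloidDist : E → E → ℝ) ∧
      ∃ (H : Type u) (_ : NormedAddCommGroup H) (_ : InnerProductSpace ℝ H) (f : E → H),
        ∀ u v, ‖f u - f v‖ = √(hyperboloidDist u v) :=
  ⟨isNegativeType_hyperboloidDist, isNegativeType_hyperboloidDist.exists_norm_sub_eq_sqrt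
    hyperboloidDist_comm hyperboloidDist_self⟩

section NegativeVectors

variable {n : ℕ}

/-- The coordinates `x¹, …, xⁿ` of `x`, as a vector of Euclidean space. -/
def spatialPart (x : Fin (n + 1) → ℝ) : EuclideanSpace ℝ (Fin n) := WithLp.toLp 2 (Fin.tail x)

/-- The scalar carrying a negative vector `x` to the upper sheet `⟨x,x⟩ = -1`, `x⁰ > 0` of the
hyperboloid. -/
noncomputable def hyperboloidScale (x : Fin (n + 1) → ℝ) : ℝ :=
  SignType.sign (x 0) / √(-lorentzForm x x)

/-- The spatial part of the point where the line spanned by a negative vector `x` meets the upper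
sheet of the hyperboloid. -/
noncomputable def hyperboloidRep (x : Fin (n + 1) → ℝ) : EuclideanSpace ℝ (Fin n) :=
  hyperboloidScale x • spatialPart x

theorem lorentzForm_eq_neg_mul_add_inner (x y : Fin (n + 1) → ℝ) :
    lorentzForm x y = -(x 0 * y 0) + ⟪spatialPart x, spatialPart y⟫ := by
  simp [lorentzForm, spatialPart, PiLp.inner_apply, Fin.tail, mul_comm]

theorem apply_zero_ne_zero_of_lorentzForm_neg {x : Fin (n + 1) → ℝ} (hx : lorentzForm x x < 0) :
    x 0 ≠ 0 := by
  intro h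
  rw [lorentzForm_eq_neg_mul_add_inner, h, real_inner_self_eq_norm_sq] at hx
  linarith [sq_nonneg ‖spatialPart x‖]

theorem hyperboloidScale_mul_apply_zero_nonneg (x : Fin (n + 1) → ℝ) :
    0 ≤ hyperboloidScale x * x 0 := by
  rw [hyperboloidScale, div_mul_eq_mul_div, sign_mul_self]
  positivity

theorem abs_hyperboloidScale {x : Fin (n + 1) → ℝ} (hx : lorentzForm x x < 0) :
    |hyperboloidScale x| = (√(-lorentzForm x x))⁻¹ := by
  rw [hyperboloidScale, abs_div, abs_of_nonneg (Real.sqrt_nonneg _)]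
  rcases (apply_zero_ne_zero_of_lorentzForm_neg hx).lt_or_gt with h | h <;> simp [h]

theorem sqrt_one_add_norm_hyperboloidRep_sq {x : Fin (n + 1) → ℝ} (hx : lorentzForm x x < 0) :
    √(1 + ‖hyperboloidRep x‖ ^ 2) = hyperboloidScale x * x 0 := by
  have scale_sq_mul : hyperboloidScale x ^ 2 * -lorentzForm x x = 1 := by
    have neg_form_pos := neg_pos.mpr hx
    rw [← sq_abs, abs_hyperboloidScale hx, inv_pow, Real.sq_sqrt neg_form_pos.le,
      inv_mul_cancel₀ neg_form_pos.ne']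
  rw [← Real.sqrt_sq (hyperboloidScale_mul_apply_zero_nonneg x), hyperboloidRep, norm_smul,
    mul_pow, Real.norm_eq_abs, sq_abs, ← real_inner_self_eq_norm_sq]
  congr 1
  linear_combination -scale_sq_mul -
    hyperboloidScale x ^ 2 * lorentzForm_eq_neg_mul_add_inner x x

theorem hyperboloidForm_hyperboloidRep {x y : Fin (n + 1) → ℝ} (hx : lorentzForm x x < 0)
    (hy : lorentzForm y y < 0) :
    hyperboloidForm (hyperboloidRep x) (hyperboloidRep y) =
      |lorentzForm x y| / √(lorentzForm x x * lorentzForm y y) := by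
  have form_eq : hyperboloidForm (hyperboloidRep x) (hyperboloidRep y) =
      -(hyperboloidScale x * hyperboloidScale y * lorentzForm x y) := by
    rw [hyperboloidForm, sqrt_one_add_norm_hyperboloidRep_sq hx,
      sqrt_one_add_norm_hyperboloidRep_sq hy, hyperboloidRep, hyperboloidRep,
      real_inner_smul_left, real_inner_smul_right, lorentzForm_eq_neg_mul_add_inner]
    ring
  rw [← abs_of_pos (one_pos.trans_le (one_le_hyperboloidForm _ _)), form_eq, abs_neg, abs_mul,
    abs_mul, abs_hyperboloidScale hx, abs_hyperboloidScale hy, ← mul_inv,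
    ← Real.sqrt_mul (neg_pos.mpr hx).le, neg_mul_neg, inv_mul_eq_div]

theorem hypDist_eq_hyperboloidDist {x y : Fin (n + 1) → ℝ} (hx : lorentzForm x x < 0)
    (hy : lorentzForm y y < 0) :
    hypDist x y = hyperboloidDist (hyperboloidRep x) (hyperboloidRep y) := by
  rw [hyperboloidDist, hyperboloidForm_hyperboloidRep hx hy]
  rfl

end NegativeVectors

/-- The geodesic distance on real hyperbolic space `H^n_ℝ` (`n ≥ 2`) is a kernel of
negative type; equivalently, the square root of the geodesic distance is a Hilbert
space distance. -/
theorem hyperbolic_dist_negative_type (n : ℕ) (hn : 2 ≤ n) :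
    (∀ (m : ℕ) (x : Fin m → (Fin (n + 1) → ℝ)) (t : Fin m → ℝ),
      (∀ i, lorentzForm (x i) (x i) < 0) → (∑ i, t i) = 0 →
      ∑ i, ∑ j, t i * t j * hypDist (x i) (x j) ≤ 0) ∧
    (∃ (H : Type) (_ : NormedAddCommGroup H) (_ : InnerProductSpace ℝ H)
        (f : {x : Fin (n + 1) → ℝ // lorentzForm x x < 0} → H),
      ∀ x y, ‖f x - f y‖ = Real.sqrt (hypDist x.1 y.1)) := by
  obtain ⟨negType, H, _, _, f, hf⟩ :=
    hyperbolic_dist_negative_type_general (EuclideanSpace ℝ (Fin n))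
  refine ⟨fun m x t hx ht => ?_, H, inferInstance, inferInstance, fun x => f (hyperboloidRep x.1),
    fun x y => by rw [hf, hypDist_eq_hyperboloidDist x.2 y.2]⟩
  simpa only [hypDist_eq_hyperboloidDist (hx _) (hx _)] using
    negType m (fun i => hyperboloidRep (x i)) t ht
end

section
/- The geodesic distance d on real hyperbolic space H^n_ℝ is a hypermetric: for each finite subset {x₁,…,xₘ} and integers t₁,…,tₘ with ∑tᵢ = 1, one has ∑ᵢⱼ tᵢtⱼ d(xᵢ,xⱼ) ≤ 0. -/
open Finset

/-!
Equip the set of hyperplanes of hyperbolic space with an isometry-invariant measure, and let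
`σ(x, y)` be the measure of the set of hyperplanes separating `x` from `y`. Isometries act
transitively on pairs of points at a given distance, so `σ` depends only on the distance, and it is
additive along geodesics. Hence `σ = C * d` with `C > 0` (Crofton's formula). It remains to
integrate over hyperplanes: if `p` is the sum of those `tᵢ` for which `xᵢ` lies on the positive side
of a given hyperplane, then that hyperplane contributes `p * (1 - p)`, which is nonpositive because
`p` is an integer.
-/

open MeasureTheory

section Additive

variable {f : ℝ → ℝ}

lemma apply_mul_le_of_additive_of_nonneg (hadd : ∀ a b, 0 ≤ a → 0 ≤ b → f (a + b) = f a + f b)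
    (hf : ∀ a, 0 ≤ a → 0 ≤ f a) {s a : ℝ} (hs : 0 ≤ s) (ha : 0 ≤ a) : f (s * a) ≤ s * f a := by
  have hmul (k : ℕ) {b : ℝ} (hb : 0 ≤ b) : f (k * b) = k * f b := by
    induction k with
    | zero => simpa using hadd 0 0 le_rfl le_rfl
    | succ k ih => push_cast; rw [add_mul, one_mul, hadd _ _ (by positivity) hb, ih]; ring
  have hmono {b c : ℝ} (hb : 0 ≤ b) (hbc : b ≤ c) : f b ≤ f c := by
    have := hadd b (c - b) hb (sub_nonneg.2 hbc)
    rw [add_sub_cancel] at this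
    linarith [hf (c - b) (sub_nonneg.2 hbc)]
  have hbound (k : ℕ) : k * (f (s * a) - s * f a) ≤ f a := by
    have hks : 0 ≤ k * s := by positivity
    have : k * f (s * a) ≤ (k * s + 1) * f a := calc
      k * f (s * a) = f (k * s * a) := by rw [mul_assoc, hmul k (by positivity)]
      _ ≤ f (⌈k * s⌉₊ * a) := hmono (by positivity) (by gcongr; exact Nat.le_ceil _)
      _ = ⌈k * s⌉₊ * f a := hmul _ ha
      _ ≤ (k * s + 1) * f a :=
        mul_le_mul_of_nonneg_right (Nat.ceil_lt_add_one hks).le (hf a ha)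
    linarith
  by_contra! hlt
  obtain ⟨k, hk⟩ := exists_nat_gt (f a / (f (s * a) - s * f a))
  rw [div_lt_iff₀ (sub_pos.2 hlt)] at hk
  exact (hbound k).not_gt hk

lemma eq_mul_of_additive_of_nonneg (hadd : ∀ a b, 0 ≤ a → 0 ≤ b → f (a + b) = f a + f b)
    (hf : ∀ a, 0 ≤ a → 0 ≤ f a) {s : ℝ} (hs : 0 ≤ s) : f s = s * f 1 := by
  refine le_antisymm ?_ ?_
  · simpa using apply_mul_le_of_additive_of_nonneg hadd hf hs zero_le_one
  · rcases hs.eq_or_lt with rfl | hpos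
    · simpa using hf 0 le_rfl
    · have := apply_mul_le_of_additive_of_nonneg hadd hf (inv_nonneg.2 hs) hs
      rwa [inv_mul_cancel₀ hpos.ne', ← div_eq_inv_mul, le_div_iff₀' hpos] at this

end Additive

section Cut

variable {α ι : Type*}

lemma int_mul_one_sub_nonpos (p : ℤ) : p * (1 - p) ≤ 0 := by
  rcases le_or_gt p 0 with h | h
  · exact mul_nonpos_of_nonpos_of_nonneg h (by lia)
  · exact mul_nonpos_of_nonneg_of_nonpos h.le (by lia)

lemma sum_mul_indicator_sdiff_nonpos [Fintype ι] (s : ι → Set α) {t : ι → ℤ} (ht : ∑ i, t i = 1)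
    (a : α) : ∑ i, ∑ j, (t i : ℝ) * t j * (s i \ s j).indicator 1 a ≤ 0 := by
  classical
  set p : ℤ := ∑ i, if a ∈ s i then t i else 0
  have hterm (i j : ι) : (t i : ℝ) * t j * (s i \ s j).indicator 1 a =
      ((if a ∈ s i then t i else 0) * (t j - if a ∈ s j then t j else 0) : ℤ) := by
    by_cases hi : a ∈ s i <;> by_cases hj : a ∈ s j <;> simp [hi, hj]
  calc ∑ i, ∑ j, (t i : ℝ) * t j * (s i \ s j).indicator 1 a = (p * (1 - p) : ℤ) := by
        simp_rw [hterm, ← Int.cast_sum, ← mul_sum, ← sum_mul, sum_sub_distrib, ht, p]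
    _ ≤ 0 := mod_cast int_mul_one_sub_nonpos p

variable [MeasurableSpace α] {μ : Measure α}

lemma sum_mul_measureReal_sdiff_nonpos [Fintype ι] {s : ι → Set α}
    (hs : ∀ i, MeasurableSet (s i)) (hfin : ∀ i j, μ (s i \ s j) ≠ ⊤) {t : ι → ℤ}
    (ht : ∑ i, t i = 1) : ∑ i, ∑ j, (t i : ℝ) * t j * μ.real (s i \ s j) ≤ 0 := by
  have hmeas (i j : ι) : MeasurableSet (s i \ s j) := (hs i).diff (hs j)
  have hint (i j : ι) :
      Integrable (fun a ↦ (t i : ℝ) * t j * (s i \ s j).indicator 1 a) μ :=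
    ((integrable_indicator_iff (hmeas i j)).2 (integrableOn_const (hfin i j))).const_mul _
  calc ∑ i, ∑ j, (t i : ℝ) * t j * μ.real (s i \ s j)
      = ∫ a, ∑ i, ∑ j, (t i : ℝ) * t j * (s i \ s j).indicator 1 a ∂μ := by
        rw [integral_finsetSum _ fun i _ ↦ integrable_finsetSum _ fun j _ ↦ hint i j]
        refine sum_congr rfl fun i _ ↦ ?_
        rw [integral_finsetSum _ fun j _ ↦ hint i j]
        simp_rw [integral_const_mul, integral_indicator_one (hmeas i _)]
    _ ≤ 0 := integral_nonpos fun a ↦ sum_mul_indicator_sdiff_nonpos s ht a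

lemma measureReal_sdiff_eq_add {s t u : Set α} (ht : MeasurableSet t) (hu : MeasurableSet u)
    (hsut : s ∩ u ⊆ t) (htsu : t ⊆ s ∪ u) (hst : μ (s \ t) ≠ ⊤) (htu : μ (t \ u) ≠ ⊤) :
    μ.real (s \ u) = μ.real (s \ t) + μ.real (t \ u) := by
  have hunion : s \ u = s \ t ∪ t \ u := by grind
  rw [hunion, measureReal_union (Set.disjoint_sdiff_left.mono_right Set.sdiff_subset)
    (ht.diff hu) hst htu]

end Cut

section FiniteDimensional

variable {E : Type*} [NormedAddCommGroup E] [NormedSpace ℝ E] [FiniteDimensional ℝ E]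

lemma continuous_bilinForm_apply_self (B : LinearMap.BilinForm ℝ E) :
    Continuous fun v ↦ B v v :=
  (LinearMap.toContinuousBilinearMap B).continuous.clm_apply continuous_id

lemma exists_pos_mul_norm_sq_le_of_pos {B : LinearMap.BilinForm ℝ E}
    (hB : ∀ v, v ≠ 0 → 0 < B v v) : ∃ C > 0, ∀ v, C * ‖v‖ ^ 2 ≤ B v v := by
  have : ProperSpace E := FiniteDimensional.proper ℝ E
  rcases subsingleton_or_nontrivial E with hE | hE
  · exact ⟨1, one_pos, fun v ↦ by simp [Subsingleton.elim v 0]⟩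
  obtain ⟨w, hw, hmin⟩ := (isCompact_sphere (0 : E) 1).exists_isMinOn
    (NormedSpace.sphere_nonempty.2 zero_le_one) (continuous_bilinForm_apply_self B).continuousOn
  refine ⟨B w w, hB w (ne_zero_of_mem_unit_sphere ⟨w, hw⟩), fun v ↦ ?_⟩
  rcases eq_or_ne v 0 with rfl | hv
  · simp
  have hunit : B w w ≤ B (‖v‖⁻¹ • v) (‖v‖⁻¹ • v) :=
    hmin (by simpa using norm_smul_inv_norm (𝕜 := ℝ) hv)
  calc B w w * ‖v‖ ^ 2 ≤ B (‖v‖⁻¹ • v) (‖v‖⁻¹ • v) * ‖v‖ ^ 2 := by gcongr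
    _ = B v v := by simp only [map_smul, LinearMap.smul_apply, smul_eq_mul]; field_simp

variable [MeasurableSpace E] [BorelSpace E] (μ : Measure E) [μ.IsAddHaarMeasure]

lemma measurePreserving_of_linearEquiv_involutive {f : E ≃ₗ[ℝ] E} (hf : Function.Involutive f) :
    MeasurePreserving f μ μ := by
  have hcomp : (f : E →ₗ[ℝ] E) ∘ₗ f = LinearMap.id := LinearMap.ext hf
  have hdet : LinearMap.det (f : E →ₗ[ℝ] E) * LinearMap.det (f : E →ₗ[ℝ] E) = 1 := by
    rw [← LinearMap.det_comp, hcomp, LinearMap.det_id]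
  have habs : |(LinearMap.det (f : E →ₗ[ℝ] E))⁻¹| = 1 := by
    rcases mul_self_eq_one_iff.1 hdet with h | h <;> simp [h]
  refine ⟨f.toContinuousLinearEquiv.continuous.measurable, ?_⟩
  have := Measure.map_linearMap_addHaar_eq_smul_addHaar μ (left_ne_zero_of_mul_eq_one hdet)
  simpa [habs] using this

variable {B : LinearMap.BilinForm ℝ E}

lemma exists_isOrthogonal_measurePreserving_map_eq (hB : B.IsSymm) {x y : E}
    (hxy : B x x = B y y) (hne : x ≠ y → B (x - y) (x - y) ≠ 0) :
    ∃ f : E ≃ₗ[ℝ] E, B.IsOrthogonal f ∧ MeasurePreserving f μ μ ∧ f x = y ∧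
      ∀ z, B z x = B z y → f z = z := by
  rcases eq_or_ne x y with rfl | h
  · exact ⟨.refl ℝ E, fun _ _ ↦ rfl, .id μ, rfl, fun _ _ ↦ rfl⟩
  have hw := hne h
  have hrefl : LinearMap.IsReflective B (x - y) :=
    ⟨.of_ne_zero hw, fun z ↦ (Ne.isUnit hw).dvd⟩
  have hcoroot (z : E) :
      LinearMap.IsReflective.coroot B hrefl z = 2 * B (x - y) z / B (x - y) (x - y) := by
    rw [eq_div_iff hw, mul_comm, LinearMap.IsReflective.apply_self_mul_coroot_apply]
  refine ⟨Module.reflection (LinearMap.IsReflective.coroot_apply_self B hrefl),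
    LinearMap.IsReflective.isOrthogonal_reflection B hrefl
      (LinearMap.BilinForm.isSymm_iff.1 hB),
    measurePreserving_of_linearEquiv_involutive μ (Module.involutive_reflection _), ?_, ?_⟩
  · have : 2 * B (x - y) x = B (x - y) (x - y) := by
      simp only [map_sub, LinearMap.sub_apply, hB.eq y x, hxy]; ring
    rw [Module.reflection_apply, hcoroot, this, div_self hw, one_smul, sub_sub_cancel]
  · intro z hz
    have : B (x - y) z = 0 := by rw [hB.eq, map_sub, hz, sub_self]
    rw [Module.reflection_apply, hcoroot, this]; simp

end FiniteDimensional

/-- `B` is symmetric and positive definite on the orthogonal complement of each of its negative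
vectors. Given a negative vector, this says that `B` has signature `(p, 1)`, where `p` may be
infinite. -/
structure IsLorentzian {V : Type*} [AddCommGroup V] [Module ℝ V]
    (B : LinearMap.BilinForm ℝ V) : Prop where
  isSymm : B.IsSymm
  apply_self_pos : ∀ {x v : V}, B x x < 0 → B x v = 0 → v ≠ 0 → 0 < B v v

section Hyperboloid

variable {V W : Type*} [AddCommGroup V] [Module ℝ V] [AddCommGroup W] [Module ℝ W]
  (B : LinearMap.BilinForm ℝ V)

/-- The sheet of the hyperboloid `B x x = -1` that lies on the side of `e`: the hyperboloid model
of hyperbolic space when `B` is Lorentzian and `B e e < 0`. -/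
def hyperboloidSheet (e : V) : Set V := {x | B x x = -1 ∧ B e x < 0}

/-- The hyperbolic distance between the lines spanned by the negative vectors `x` and `y`. -/
noncomputable def hyperbolicDist (x y : V) : ℝ := Real.arcosh (|B x y| / √(B x x * B y y))

/-- The vectors `v` for which `x` lies strictly on the positive side of the hyperplane `vᗮ`. -/
def halfSpace (x : V) : Set V := {v | 0 < B x v}

/-- For `p` in the unit hyperboloid and `u` a unit tangent vector at `p`, the geodesic starting at
`p` in the direction of `u`, parametrised by arc length. -/
noncomputable def hyperbolicGeodesic (p u : V) (s : ℝ) : V := Real.cosh s • p + Real.sinh s • u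

variable {B}

lemma halfSpace_smul {c : ℝ} (hc : 0 < c) (x : V) : halfSpace B (c • x) = halfSpace B x := by
  ext v
  simp [halfSpace, hc]

lemma halfSpace_inter_subset_halfSpace {a b : ℝ} (ha : 0 < a) (hb : 0 ≤ b) (x y : V) :
    halfSpace B x ∩ halfSpace B y ⊆ halfSpace B (a • x + b • y) := by
  rintro v ⟨hx : 0 < B x v, hy : 0 < B y v⟩
  have : 0 < a * B x v + b * B y v := by positivity
  simpa [halfSpace] using this

lemma halfSpace_subset_halfSpace_union {a b : ℝ} (ha : 0 ≤ a) (hb : 0 ≤ b) (x y : V) :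
    halfSpace B (a • x + b • y) ⊆ halfSpace B x ∪ halfSpace B y := by
  intro v hv
  simp only [halfSpace, Set.mem_union, Set.mem_ofPred_eq, map_add, map_smul, LinearMap.add_apply,
    LinearMap.smul_apply, smul_eq_mul] at hv ⊢
  by_contra! h
  exact hv.not_ge (add_nonpos (mul_nonpos_of_nonneg_of_nonpos ha h.1)
    (mul_nonpos_of_nonneg_of_nonpos hb h.2))

lemma hyperbolicDist_smul_smul {c d : ℝ} (hc : c ≠ 0) (hd : d ≠ 0) (x y : V) :
    hyperbolicDist B (c • x) (d • y) = hyperbolicDist B x y := by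
  have hsqrt : √(B (c • x) (c • x) * B (d • y) (d • y)) = |c * d| * √(B x x * B y y) := by
    rw [← Real.sqrt_sq_eq_abs, ← Real.sqrt_mul (sq_nonneg _)]
    congr 1
    simp only [map_smul, LinearMap.smul_apply, smul_eq_mul]; ring
  have happly : |B (c • x) (d • y)| = |c * d| * |B x y| := by
    rw [← abs_mul]
    congr 1
    simp only [map_smul, LinearMap.smul_apply, smul_eq_mul]; ring
  rw [hyperbolicDist, hsqrt, happly, mul_div_mul_left _ _ (by positivity), hyperbolicDist]

namespace IsLorentzian

lemma comp (hB : IsLorentzian B) {φ : W →ₗ[ℝ] V} (hφ : Function.Injective φ) :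
    IsLorentzian (B.comp φ φ) where
  isSymm := ⟨fun x y ↦ hB.isSymm.eq (φ x) (φ y)⟩
  apply_self_pos hx hxv hv := hB.apply_self_pos hx hxv ((map_ne_zero_iff φ hφ).2 hv)

variable (hB : IsLorentzian B) {e x y v p u : V}
include hB

lemma apply_self_nonneg (hx : B x x < 0) (hxv : B x v = 0) : 0 ≤ B v v := by
  rcases eq_or_ne v 0 with rfl | hv
  · simp
  · exact (hB.apply_self_pos hx hxv hv).le

lemma apply_neg_of_apply_neg (he : B e e < 0) (hx : B x x < 0) (hy : B y y < 0)
    (hex : B e x < 0) (hey : B e y < 0) : B x y < 0 := by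
  have horth : B e (B e y • x - B e x • y) = 0 := by
    simp only [map_sub, map_smul, smul_eq_mul]; ring
  have hnonneg := hB.apply_self_nonneg he horth
  simp only [map_sub, map_smul, LinearMap.sub_apply, LinearMap.smul_apply, smul_eq_mul,
    hB.isSymm.eq y x] at hnonneg
  have hpos : 0 < B e x * B e y := mul_pos_of_neg_of_neg hex hey
  have hx' : B e y ^ 2 * B x x < 0 := mul_neg_of_pos_of_neg (sq_pos_of_neg hey) hx
  have hy' : B e x ^ 2 * B y y < 0 := mul_neg_of_pos_of_neg (sq_pos_of_neg hex) hy
  nlinarith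

lemma exists_smul_mem_hyperboloidSheet (he : B e e < 0) (hx : B x x < 0) :
    ∃ c : ℝ, c ≠ 0 ∧ c • x ∈ hyperboloidSheet B e := by
  have hex : B e x ≠ 0 := fun h ↦ (hB.apply_self_nonneg he h).not_gt hx
  have hsqrt : 0 < √(-B x x) := Real.sqrt_pos.2 (neg_pos.2 hx)
  have hsq : √(-B x x) ^ 2 = -B x x := Real.sq_sqrt (neg_pos.2 hx).le
  refine ⟨-B e x / (|B e x| * √(-B x x)), by simp [hex, hsqrt.ne'], ?_, ?_⟩
  · simp only [map_smul, LinearMap.smul_apply, smul_eq_mul]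
    field_simp
    rw [sq_abs, hsq]
    field_simp
  · have : B e x * B e x > 0 := mul_self_pos.2 hex
    rw [map_smul, smul_eq_mul, div_mul_eq_mul_div]
    exact div_neg_of_neg_of_pos (by linarith) (by positivity)

/-- The determinant of the Gram matrix of `x`, `y`, `v` is nonpositive. -/
lemma gram_le (hx : B x x = -1) (hy : B y y = -1) (hxy : 1 < B x y ^ 2) (v : V) :
    B x v ^ 2 + B y v ^ 2 + 2 * B x v * B y v * B x y ≤ (B x y ^ 2 - 1) * B v v := by
  have hk : 0 < B x y ^ 2 - 1 := sub_pos.2 hxy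
  set w := (B x y ^ 2 - 1) • v - (B x v + B x y * B y v) • x - (B y v + B x y * B x v) • y with hw
  have horth : B x w = 0 := by
    simp only [hw, map_sub, map_smul, smul_eq_mul, hx]; ring
  have hnonneg := hB.apply_self_nonneg (by linarith) horth
  have hexpand : B w w = (B x y ^ 2 - 1) * ((B x y ^ 2 - 1) * B v v -
      (B x v ^ 2 + B y v ^ 2 + 2 * B x v * B y v * B x y)) := by
    simp only [hw, map_sub, map_smul, LinearMap.sub_apply, LinearMap.smul_apply, smul_eq_mul,
      hB.isSymm.eq y x, hB.isSymm.eq v x, hB.isSymm.eq v y, hx, hy]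
    ring
  rw [hexpand] at hnonneg
  exact sub_nonneg.1 (nonneg_of_mul_nonneg_right hnonneg hk)

lemma apply_sub_self_of_apply_self_eq (hx : B x x = -1) (hy : B y y = -1) :
    B (x - y) (x - y) = -2 - 2 * B x y := by
  simp only [map_sub, LinearMap.sub_apply, hB.isSymm.eq y x, hx, hy]; ring

lemma apply_self_add_two_mul_sq_pos (hx : B x x = -1) (hv : v ≠ 0) :
    0 < B v v + 2 * B x v ^ 2 := by
  have horth : B x (v + B x v • x) = 0 := by
    simp only [map_add, map_smul, smul_eq_mul, hx]; ring
  have hexpand : B (v + B x v • x) (v + B x v • x) = B v v + B x v ^ 2 := by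
    simp only [map_add, map_smul, LinearMap.add_apply, LinearMap.smul_apply, smul_eq_mul, hx,
      hB.isSymm.eq v x]
    ring
  rcases eq_or_ne (B x v) 0 with hxv | hxv
  · simpa [hxv] using hB.apply_self_pos (by linarith) hxv hv
  · have hnonneg := hB.apply_self_nonneg (by linarith) horth
    rw [hexpand] at hnonneg
    have : 0 < B x v ^ 2 := by positivity
    linarith

section Sheet

variable (he : B e e < 0) (hx : x ∈ hyperboloidSheet B e) (hy : y ∈ hyperboloidSheet B e)
include he hx hy

lemma apply_neg_of_mem : B x y < 0 :=
  hB.apply_neg_of_apply_neg he (by linarith [hx.1]) (by linarith [hy.1]) hx.2 hy.2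

lemma apply_sub_self_pos_of_mem (hne : x ≠ y) : 0 < B (x - y) (x - y) := by
  have hneg := hB.apply_neg_of_mem he hx hy
  refine hB.apply_self_pos (x := x + y) ?_ ?_ (sub_ne_zero.2 hne) <;>
    simp only [map_add, map_sub, LinearMap.add_apply, hB.isSymm.eq y x, hx.1, hy.1] <;> linarith

lemma apply_lt_neg_one_of_mem (hne : x ≠ y) : B x y < -1 := by
  have := hB.apply_sub_self_pos_of_mem he hx hy hne
  rw [hB.apply_sub_self_of_apply_self_eq hx.1 hy.1] at this
  linarith

lemma apply_le_neg_one_of_mem : B x y ≤ -1 := by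
  rcases eq_or_ne x y with rfl | hne
  · exact hx.1.le
  · exact (hB.apply_lt_neg_one_of_mem he hx hy hne).le

lemma hyperbolicDist_eq_of_mem : hyperbolicDist B x y = Real.arcosh (-B x y) := by
  rw [hyperbolicDist, hx.1, hy.1, abs_of_neg (hB.apply_neg_of_mem he hx hy)]
  simp

lemma exists_unit_tangent (hne : x ≠ y) : ∃ u, B x u = 0 ∧ B u u = 1 := by
  have hlt := hB.apply_lt_neg_one_of_mem he hx hy hne
  have hpos : 0 < B x y ^ 2 - 1 := by nlinarith
  refine ⟨(√(B x y ^ 2 - 1))⁻¹ • (y + B x y • x), ?_, ?_⟩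
  · simp [hx.1]
  · have : B (y + B x y • x) (y + B x y • x) = √(B x y ^ 2 - 1) ^ 2 := by
      rw [Real.sq_sqrt hpos.le]
      simp only [map_add, map_smul, LinearMap.add_apply, LinearMap.smul_apply, smul_eq_mul, hx.1,
        hy.1, hB.isSymm.eq y x]
      ring
    have := Real.sqrt_pos.2 hpos
    simp only [map_smul, LinearMap.smul_apply, smul_eq_mul, *]
    field_simp

end Sheet

section Geodesic

variable (hp : B p p = -1) (hpu : B p u = 0) (hu : B u u = 1)
include hp hpu hu

lemma apply_hyperbolicGeodesic (s t : ℝ) :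
    B (hyperbolicGeodesic p u s) (hyperbolicGeodesic p u t) = -Real.cosh (s - t) := by
  simp only [hyperbolicGeodesic, map_add, map_smul, LinearMap.add_apply, LinearMap.smul_apply,
    smul_eq_mul, hB.isSymm.eq u p, hp, hpu, hu, Real.cosh_sub]
  ring

lemma hyperbolicGeodesic_mem (he : B e e < 0) (hep : B e p < 0) (s : ℝ) :
    hyperbolicGeodesic p u s ∈ hyperboloidSheet B e := by
  have hunit : B (hyperbolicGeodesic p u s) (hyperbolicGeodesic p u s) = -1 := by
    simp [hB.apply_hyperbolicGeodesic hp hpu hu]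
  have hneg : B p (hyperbolicGeodesic p u s) < 0 := by
    simp [hyperbolicGeodesic, hp, hpu, Real.cosh_pos]
  exact ⟨hunit, hB.apply_neg_of_apply_neg (by linarith) he (by linarith)
    (by rwa [hB.isSymm.eq]) hneg⟩

end Geodesic

end IsLorentzian

lemma sinh_add_smul_hyperbolicGeodesic (p u : V) (a b : ℝ) :
    Real.sinh (a + b) • hyperbolicGeodesic p u a =
      Real.sinh a • hyperbolicGeodesic p u (a + b) + Real.sinh b • hyperbolicGeodesic p u 0 := by
  simp only [hyperbolicGeodesic, Real.sinh_add, Real.cosh_add, Real.cosh_zero, Real.sinh_zero]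
  match_scalars
  · linear_combination Real.sinh b * Real.cosh_sq_sub_sinh_sq a
  · ring

end Hyperboloid

section Bounded

variable {E : Type*} [NormedAddCommGroup E] [NormedSpace ℝ E] [FiniteDimensional ℝ E]
  {B : LinearMap.BilinForm ℝ E}

namespace IsLorentzian

variable (hB : IsLorentzian B) {e x y : E}
include hB

lemma isBounded_apply_self_add_two_mul_sq_le (hx : B x x = -1) (R : ℝ) :
    Bornology.IsBounded {v | B v v + 2 * B x v ^ 2 ≤ R} := by
  have hpos : ∀ v, v ≠ 0 → 0 < (B + (2 : ℝ) • LinearMap.BilinForm.linMulLin (B x) (B x)) v v := by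
    intro v hv
    simpa [sq] using hB.apply_self_add_two_mul_sq_pos hx hv
  obtain ⟨C, hC, hbound⟩ := exists_pos_mul_norm_sq_le_of_pos hpos
  refine (Metric.isBounded_closedBall (x := 0) (r := √(R / C))).subset fun v hv ↦ ?_
  rw [mem_closedBall_zero_iff]
  refine Real.le_sqrt_of_sq_le ((le_div_iff₀' hC).2 ((hbound v).trans ?_))
  simpa [sq] using hv

lemma isBounded_halfSpace_sdiff_inter (he : B e e < 0) (hx : x ∈ hyperboloidSheet B e)
    (hy : y ∈ hyperboloidSheet B e) :
    Bornology.IsBounded ((halfSpace B x \ halfSpace B y) ∩ {v | B v v < 1}) := by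
  rcases eq_or_ne x y with rfl | hne
  · simp
  have hlt := hB.apply_lt_neg_one_of_mem he hx hy hne
  have hsq : 1 < B x y ^ 2 := by nlinarith
  refine (hB.isBounded_apply_self_add_two_mul_sq_le hx.1 (1 + 2 * (B x y ^ 2 - 1))).subset ?_
  rintro v ⟨⟨hxv, hyv⟩, hv⟩
  simp only [halfSpace, Set.mem_ofPred_eq, not_lt] at hxv hyv hv ⊢
  have hgram := hB.gram_le hx.1 hy.1 hsq v
  have hcross : 0 ≤ B x v * B y v * B x y :=
    mul_nonneg_of_nonpos_of_nonpos (mul_nonpos_of_nonneg_of_nonpos hxv.le hyv) (by linarith)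
  have hle : (B x y ^ 2 - 1) * B v v ≤ B x y ^ 2 - 1 :=
    mul_le_of_le_one_right (by linarith) hv.le
  nlinarith [sq_nonneg (B y v)]

end IsLorentzian

end Bounded

section Crofton

section Definitions

variable {E : Type*} [AddCommGroup E] [Module ℝ E] [MeasurableSpace E]
  (B : LinearMap.BilinForm ℝ E) (μ : Measure E)

/-- For a Haar measure `μ`, an isometry-invariant measure on the hyperplanes of hyperbolic space.
The hyperplane `vᗮ` is represented by the vector `v`; vectors with `B v v ≤ 0` separate no two
points. The truncation `B v v < 1` makes the set of hyperplanes that separate two points have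
finite measure. -/
noncomputable def hyperplaneMeasure : Measure E := μ.restrict {v | B v v < 1}

/-- The measure of the set of hyperplanes separating `x` from `y`. A hyperplane is counted
through those of its normal vectors `v` that have `x` on their positive side. -/
noncomputable def separation (x y : E) : ℝ :=
  (hyperplaneMeasure B μ).real (halfSpace B x \ halfSpace B y)

lemma separation_self (x : E) : separation B μ x x = 0 := by
  simp [separation]

lemma separation_nonneg (x y : E) : 0 ≤ separation B μ x y :=
  measureReal_nonneg

end Definitions

variable {E : Type*} [NormedAddCommGroup E] [NormedSpace ℝ E] [FiniteDimensional ℝ E]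
  [MeasurableSpace E] [BorelSpace E] {B : LinearMap.BilinForm ℝ E} {μ : Measure E}

lemma measurableSet_apply_self_lt (B : LinearMap.BilinForm ℝ E) (c : ℝ) :
    MeasurableSet {v | B v v < c} :=
  (isOpen_lt (continuous_bilinForm_apply_self B) continuous_const).measurableSet

lemma measurableSet_halfSpace (B : LinearMap.BilinForm ℝ E) (x : E) :
    MeasurableSet (halfSpace B x) :=
  (isOpen_lt continuous_const (B x).continuous_of_finiteDimensional).measurableSet

lemma separation_map_map {f : E ≃ₗ[ℝ] E} (hf : B.IsOrthogonal f) (hμ : MeasurePreserving f μ μ)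
    (x y : E) : separation B μ (f x) (f y) = separation B μ x y := by
  have hν : MeasurePreserving f (hyperplaneMeasure B μ) (hyperplaneMeasure B μ) := by
    have := hμ.restrict_preimage (measurableSet_apply_self_lt B 1)
    simpa only [hyperplaneMeasure, Set.preimage_ofPred_eq, hf _ _] using this
  have hpre : f ⁻¹' (halfSpace B (f x) \ halfSpace B (f y)) = halfSpace B x \ halfSpace B y := by
    ext v
    simp [halfSpace, hf _ _]
  rw [separation, separation, ← hpre, hν.measureReal_preimage
    ((measurableSet_halfSpace B _).diff (measurableSet_halfSpace B _)).nullMeasurableSet]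

namespace IsLorentzian

variable [μ.IsAddHaarMeasure] (hB : IsLorentzian B) {e x y x' y' p u : E}
include hB

section Sheet

variable (he : B e e < 0) (hx : x ∈ hyperboloidSheet B e) (hy : y ∈ hyperboloidSheet B e)
include he hx hy

lemma hyperplaneMeasure_halfSpace_sdiff_ne_top :
    hyperplaneMeasure B μ (halfSpace B x \ halfSpace B y) ≠ ⊤ := by
  rw [hyperplaneMeasure, Measure.restrict_apply
    ((measurableSet_halfSpace B x).diff (measurableSet_halfSpace B y))]
  exact (hB.isBounded_halfSpace_sdiff_inter he hx hy).measure_lt_top.ne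

lemma separation_pos (hne : x ≠ y) : 0 < separation B μ x y := by
  refine ENNReal.toReal_pos ?_ (hB.hyperplaneMeasure_halfSpace_sdiff_ne_top he hx hy)
  set U : Set E := {v | 0 < B x v ∧ B y v < 0 ∧ B v v < 1}
  have hopen : IsOpen U :=
    (isOpen_lt continuous_const (B x).continuous_of_finiteDimensional).inter
      ((isOpen_lt (B y).continuous_of_finiteDimensional continuous_const).inter
        (isOpen_lt (continuous_bilinForm_apply_self B) continuous_const))
  have hnonempty : U.Nonempty := by
    have hlt := hB.apply_lt_neg_one_of_mem he hx hy hne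
    set r := B (x - y) (x - y)
    have hr : 0 < r := hB.apply_sub_self_pos_of_mem he hx hy hne
    have hc : 0 < (1 + r)⁻¹ := by positivity
    refine ⟨(1 + r)⁻¹ • (x - y), ?_, ?_, ?_⟩
    · rw [map_smul, map_sub, hx.1, smul_eq_mul]
      exact mul_pos hc (by linarith)
    · rw [map_smul, map_sub, hy.1, hB.isSymm.eq y x, smul_eq_mul]
      exact mul_neg_of_pos_of_neg hc (by linarith)
    · simp only [map_smul, LinearMap.smul_apply, smul_eq_mul]
      change (1 + r)⁻¹ * ((1 + r)⁻¹ * r) < 1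
      field_simp
      nlinarith
  rw [hyperplaneMeasure, Measure.restrict_apply
    ((measurableSet_halfSpace B x).diff (measurableSet_halfSpace B y))]
  refine ((hopen.measure_pos μ hnonempty).trans_le (measure_mono ?_)).ne'
  exact fun v ⟨hxv, hyv, hv⟩ ↦ ⟨⟨hxv, hyv.not_gt⟩, hv⟩

end Sheet

/-- Hyperbolic space is two-point homogeneous: the pair `(x, y)` is moved to `(x', y')` by at most
two reflections. -/
lemma separation_eq_of_apply_eq (he : B e e < 0) (hx : x ∈ hyperboloidSheet B e)
    (hy : y ∈ hyperboloidSheet B e) (hx' : x' ∈ hyperboloidSheet B e)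
    (hy' : y' ∈ hyperboloidSheet B e) (h : B x y = B x' y') :
    separation B μ x y = separation B μ x' y' := by
  obtain ⟨f, hf, hfμ, rfl, -⟩ := exists_isOrthogonal_measurePreserving_map_eq μ hB.isSymm
    (hx.1.trans hx'.1.symm) fun hne ↦ (hB.apply_sub_self_pos_of_mem he hx hx' hne).ne'
  have hfix : B (f x) (f y) = B (f x) y' := by rw [hf x y, h]
  have hfy : B (f y) (f y) = B y' y' := by rw [hf y y, hy.1, hy'.1]
  have horth : B (f x) (f y - y') = 0 := by rw [map_sub, hfix, sub_self]
  obtain ⟨g, hg, hgμ, hgy, hgfix⟩ := exists_isOrthogonal_measurePreserving_map_eq μ hB.isSymm hfy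
    fun hne ↦ (hB.apply_self_pos (by linarith [hx'.1]) horth (sub_ne_zero.2 hne)).ne'
  calc separation B μ x y = separation B μ (g (f x)) (g (f y)) := by
        rw [separation_map_map hg hgμ, separation_map_map hf hfμ]
    _ = separation B μ (f x) y' := by rw [hgy, hgfix _ hfix]

section Geodesic

variable (he : B e e < 0) (hp : p ∈ hyperboloidSheet B e) (hpu : B p u = 0) (hu : B u u = 1)
include he hp hpu hu

lemma separation_hyperbolicGeodesic_add {a b : ℝ} (ha : 0 ≤ a) (hb : 0 ≤ b) :
    separation B μ p (hyperbolicGeodesic p u (a + b)) =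
      separation B μ p (hyperbolicGeodesic p u a) +
        separation B μ p (hyperbolicGeodesic p u b) := by
  have hzero : hyperbolicGeodesic p u 0 = p := by simp [hyperbolicGeodesic]
  rcases ha.eq_or_lt with rfl | ha
  · simp [hzero, separation_self]
  set γ := hyperbolicGeodesic p u
  have hmem (s : ℝ) : γ s ∈ hyperboloidSheet B e :=
    hB.hyperbolicGeodesic_mem hp.1 hpu hu he hp.2 s
  have hfin (s t : ℝ) := hB.hyperplaneMeasure_halfSpace_sdiff_ne_top (μ := μ) he (hmem s) (hmem t)
  have hshift : separation B μ (γ a) (γ (a + b)) = separation B μ (γ 0) (γ b) :=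
    hB.separation_eq_of_apply_eq he (hmem _) (hmem _) (hmem _) (hmem _)
      (by simp [γ, hB.apply_hyperbolicGeodesic hp.1 hpu hu])
  have hsa := Real.sinh_pos_iff.2 ha
  have hsb := Real.sinh_nonneg_iff.2 hb
  have hbetween : halfSpace B (γ a) =
      halfSpace B (Real.sinh a • γ (a + b) + Real.sinh b • γ 0) := by
    rw [← sinh_add_smul_hyperbolicGeodesic, halfSpace_smul (Real.sinh_pos_iff.2 (by positivity))]
  have hadd : separation B μ (γ 0) (γ (a + b)) =
      separation B μ (γ 0) (γ a) + separation B μ (γ a) (γ (a + b)) := by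
    refine measureReal_sdiff_eq_add (measurableSet_halfSpace B _) (measurableSet_halfSpace B _)
      ?_ ?_ (hfin _ _) (hfin _ _)
    · rw [hbetween, Set.inter_comm]
      exact halfSpace_inter_subset_halfSpace hsa hsb _ _
    · rw [hbetween, Set.union_comm]
      exact halfSpace_subset_halfSpace_union hsa.le hsb _ _
  rwa [hshift, hzero] at hadd

lemma separation_hyperbolicGeodesic {s : ℝ} (hs : 0 ≤ s) :
    separation B μ p (hyperbolicGeodesic p u s) =
      s * separation B μ p (hyperbolicGeodesic p u 1) :=
  eq_mul_of_additive_of_nonneg (f := fun s ↦ separation B μ p (hyperbolicGeodesic p u s))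
    (fun _ _ ↦ hB.separation_hyperbolicGeodesic_add he hp hpu hu)
    (fun _ _ ↦ separation_nonneg B μ _ _) hs

end Geodesic

variable (μ) in
lemma exists_separation_eq_mul_hyperbolicDist (he : B e e < 0) :
    ∃ C > 0, ∀ x ∈ hyperboloidSheet B e, ∀ y ∈ hyperboloidSheet B e,
      separation B μ x y = C * hyperbolicDist B x y := by
  rcases (hyperboloidSheet B e).subsingleton_or_nontrivial with hsub | ⟨p, hp, q, hq, hpq⟩
  · refine ⟨1, one_pos, fun x hx y hy ↦ ?_⟩
    rw [hsub hy hx, separation_self, hB.hyperbolicDist_eq_of_mem he hx hx, hx.1]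
    simp
  obtain ⟨u, hpu, hu⟩ := hB.exists_unit_tangent he hp hq hpq
  set γ := hyperbolicGeodesic p u
  have hmem (s : ℝ) : γ s ∈ hyperboloidSheet B e :=
    hB.hyperbolicGeodesic_mem hp.1 hpu hu he hp.2 s
  have happly (s : ℝ) : B p (γ s) = -Real.cosh s := by simp [γ, hyperbolicGeodesic, hp.1, hpu]
  have hne : p ≠ γ 1 := by
    intro h
    have hcosh := happly 1
    rw [← h, hp.1] at hcosh
    linarith [Real.one_lt_cosh.2 one_ne_zero]
  refine ⟨separation B μ p (γ 1), hB.separation_pos he hp (hmem 1) hne, fun x hx y hy ↦ ?_⟩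
  have hle : 1 ≤ -B x y := by linarith [hB.apply_le_neg_one_of_mem he hx hy]
  rw [hB.hyperbolicDist_eq_of_mem he hx hy, mul_comm,
    ← hB.separation_hyperbolicGeodesic he hp hpu hu (Real.arcosh_nonneg hle)]
  refine hB.separation_eq_of_apply_eq he hx hy hp (hmem _) ?_
  rw [happly, Real.cosh_arcosh hle, neg_neg]

end IsLorentzian

end Crofton

section Hypermetric

lemma IsLorentzian.sum_mul_hyperbolicDist_nonpos_of_finiteDimensional {ι E : Type*} [Fintype ι]
    [NormedAddCommGroup E] [NormedSpace ℝ E] [FiniteDimensional ℝ E]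
    {B : LinearMap.BilinForm ℝ E} (hB : IsLorentzian B) {x : ι → E}
    (hx : ∀ i, B (x i) (x i) < 0) {t : ι → ℤ} (ht : ∑ i, t i = 1) :
    ∑ i, ∑ j, (t i : ℝ) * t j * hyperbolicDist B (x i) (x j) ≤ 0 := by
  borelize E
  obtain ⟨i₀, -, -⟩ : ∃ i ∈ univ, t i ≠ 0 := exists_ne_zero_of_sum_ne_zero (by simp [ht])
  choose c hc hcx using fun i ↦ hB.exists_smul_mem_hyperboloidSheet (hx i₀) (hx i)
  obtain ⟨C, hC, hcrofton⟩ := hB.exists_separation_eq_mul_hyperbolicDist Measure.addHaar (hx i₀)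
  have hdist (i j : ι) : separation B Measure.addHaar (c i • x i) (c j • x j) =
      C * hyperbolicDist B (x i) (x j) := by
    rw [hcrofton _ (hcx i) _ (hcx j), hyperbolicDist_smul_smul (hc i) (hc j)]
  have hcut : ∑ i, ∑ j, (t i : ℝ) * t j *
      separation B Measure.addHaar (c i • x i) (c j • x j) ≤ 0 :=
    sum_mul_measureReal_sdiff_nonpos (fun i ↦ measurableSet_halfSpace B _)
      (fun i j ↦ hB.hyperplaneMeasure_halfSpace_sdiff_ne_top (hx i₀) (hcx i) (hcx j)) ht
  simp_rw [hdist, mul_left_comm _ C, ← mul_sum] at hcut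
  exact nonpos_of_mul_nonpos_right hcut hC

lemma exists_injective_linearMap_range_eq_span {K V ι : Type*} [Field K] [AddCommGroup V]
    [Module K V] [Finite ι] (x : ι → V) :
    ∃ (d : ℕ) (φ : (Fin d → K) →ₗ[K] V), Function.Injective φ ∧
      LinearMap.range φ = Submodule.span K (Set.range x) := by
  have := FiniteDimensional.span_of_finite K (Set.finite_range x)
  set W := Submodule.span K (Set.range x)
  set f := (Module.finBasis K W).equivFun.symm
  exact ⟨Module.finrank K W, W.subtype ∘ₗ f, W.injective_subtype.comp f.injective, by simp⟩

theorem hyperbolic_dist_hypermetric_general {ι V : Type*} [Fintype ι] [AddCommGroup V]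
    [Module ℝ V] {B : LinearMap.BilinForm ℝ V} (hB : IsLorentzian B) (x : ι → V)
    (hx : ∀ i, B (x i) (x i) < 0) (t : ι → ℤ) (ht : ∑ i, t i = 1) :
    ∑ i, ∑ j, (t i : ℝ) * t j * hyperbolicDist B (x i) (x j) ≤ 0 := by
  obtain ⟨d, φ, hφ, hrange⟩ := exists_injective_linearMap_range_eq_span (K := ℝ) x
  have hlift (i : ι) : x i ∈ LinearMap.range φ := hrange ▸ Submodule.subset_span ⟨i, rfl⟩
  choose v hv using hlift
  obtain rfl : x = fun i ↦ φ (v i) := funext fun i ↦ (hv i).symm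
  exact (hB.comp hφ).sum_mul_hyperbolicDist_nonpos_of_finiteDimensional (x := v) hx ht

end Hypermetric

section LorentzForm

variable (n : ℕ)

/-- `lorentzForm` as a bilinear form. -/
def lorentzBilin : LinearMap.BilinForm ℝ (Fin (n + 1) → ℝ) :=
  LinearMap.mk₂ ℝ lorentzForm
    (fun x y z ↦ by simp only [lorentzForm, Pi.add_apply, add_mul, sum_add_distrib]; ring)
    (fun c x y ↦ by
      simp only [lorentzForm, Pi.smul_apply, smul_eq_mul, mul_assoc, ← mul_sum]; ring)
    (fun x y z ↦ by simp only [lorentzForm, Pi.add_apply, mul_add, sum_add_distrib]; ring)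
    (fun c x y ↦ by
      simp only [lorentzForm, Pi.smul_apply, smul_eq_mul, mul_left_comm _ c, ← mul_sum]; ring)

lemma isLorentzian_lorentzBilin : IsLorentzian (lorentzBilin n) where
  isSymm := ⟨fun x y ↦ by simp [lorentzBilin, lorentzForm, mul_comm]⟩
  apply_self_pos {x v} hx hxv hv := by
    simp only [lorentzBilin, LinearMap.mk₂_apply, lorentzForm, ← sq] at hx hxv ⊢
    set X := ∑ i : Fin n, x i.succ ^ 2
    set Y := ∑ i : Fin n, v i.succ ^ 2
    have hcauchy : (x 0 * v 0) ^ 2 ≤ X * Y := by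
      rw [show x 0 * v 0 = ∑ i : Fin n, x i.succ * v i.succ by linarith]
      exact sum_mul_sq_le_sq_mul_sq _ _ _
    have hX : X < x 0 ^ 2 := by linarith
    have hx₀ : 0 < x 0 ^ 2 := (by positivity : 0 ≤ X).trans_lt hX
    have hY : 0 < Y := by
      refine (by positivity : 0 ≤ Y).lt_of_ne' fun hY ↦ hv ?_
      have hv₀ : v 0 = 0 := by
        rw [hY, mul_zero] at hcauchy
        exact (mul_eq_zero_iff_left (sq_pos_iff.1 hx₀)).1 (sq_nonpos_iff _ |>.1 hcauchy)
      have hsucc : ∀ i : Fin n, v i.succ = 0 := by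
        simpa [Y, sum_eq_zero_iff_of_nonneg, sq_nonneg] using hY
      ext i
      exact Fin.cases hv₀ hsucc i
    have : x 0 ^ 2 * v 0 ^ 2 < x 0 ^ 2 * Y := calc
      x 0 ^ 2 * v 0 ^ 2 = (x 0 * v 0) ^ 2 := by ring
      _ ≤ X * Y := hcauchy
      _ < x 0 ^ 2 * Y := by gcongr
    linarith [lt_of_mul_lt_mul_left this hx₀.le]

end LorentzForm

/-- The geodesic distance on real hyperbolic space `H^n_ℝ` is a hypermetric: for
each finite family of points and integers `tᵢ` with `∑ tᵢ = 1`,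
`∑ᵢⱼ tᵢ tⱼ d(xᵢ,xⱼ) ≤ 0`. -/
theorem hyperbolic_dist_hypermetric (n : ℕ) (hn : 2 ≤ n)
    (m : ℕ) (x : Fin m → (Fin (n + 1) → ℝ))
    (hx : ∀ i, lorentzForm (x i) (x i) < 0)
    (t : Fin m → ℤ) (ht : (∑ i, t i) = 1) :
    ∑ i, ∑ j, (t i : ℝ) * (t j : ℝ) * hypDist (x i) (x j) ≤ 0 :=
  hyperbolic_dist_hypermetric_general (isLorentzian_lorentzBilin n) x hx t ht
end
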